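/- For each ℓ ∈ {1,2} and k ∈ {1,2}: under the conditioned measure ℙ_ℓ with the conditionally resampled exchangeable pair, E_ℓ[(M − M')^k | M] = L_k(m(σ)) + R_k(m(σ)) + T_{ℓ,k}(m(σ)), where R_k are the error functions from the unconditioned moment computation (satisfying |R_k(m)| ≤ K/N for all m ∈ [0,1]) and T_{ℓ,k} satisfies E_ℓ|T_{ℓ,k}(m(σ))| ≤ K·ℙ_ℓ(σ ∈ S_ℓ'') for a constant K independent of N. -/

import Mathlib

open Real Finset MeasureTheory

noncomputable section

/-- Dimer configurations (matchings of the complete graph on `Fin N`), encoded as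
involutions of `Fin N`: fixed points are monomers, 2-cycles are dimers. -/
abbrev Dimer (N : ℕ) := {f : Fin N → Fin N // ∀ i, f (f i) = i}

/-- The set of monomers (dimer-free vertices) of a dimer configuration. -/
def monomers {N : ℕ} (D : Dimer N) : Finset (Fin N) :=
  Finset.univ.filter fun i => D.1 i = i

/-- Monomer density `m(D) = |𝓜(D)|/N`. -/
def mDim {N : ℕ} (D : Dimer N) : ℝ := ((monomers D).card : ℝ) / N

/-- The parameter `b = (log N)/2 + h - J`. -/
def bIMD (N : ℕ) (J h : ℝ) : ℝ := Real.log N / 2 + h - J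

/-- The Gibbs weight `exp(-H(D)) = exp(N (a m(D)^2 + b m(D)))` with `a = J`. -/
def wDim (N : ℕ) (J h : ℝ) (D : Dimer N) : ℝ :=
  Real.exp (N * (J * mDim D ^ 2 + bIMD N J h * mDim D))

/-- The probability of an event `A` under the IMD Gibbs measure. -/
def probDim (N : ℕ) (J h : ℝ) (A : Dimer N → Prop) : ℝ :=
  (∑ D : Dimer N, Set.indicator {D | A D} (wDim N J h) D) / ∑ D : Dimer N, wDim N J h D

/-- The conditional probability `ℙ(A | B)` under the IMD Gibbs measure. -/
def condProbDim (N : ℕ) (J h : ℝ) (A B : Dimer N → Prop) : ℝ :=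
  (∑ D : Dimer N, Set.indicator {D | A D ∧ B D} (wDim N J h) D) /
    ∑ D : Dimer N, Set.indicator {D | B D} (wDim N J h) D

/-- `g(x) = (√(e^{4x} + 4 e^{2x}) - e^{2x})/2`. -/
def gFun (x : ℝ) : ℝ := (Real.sqrt (Real.exp (4*x) + 4 * Real.exp (2*x)) - Real.exp (2*x)) / 2

/-- `τ(x) = (2x-1)J + h`. -/
def tauFun (J h x : ℝ) : ℝ := (2*x - 1) * J + h

/-- `𝑝̃(m) = -J m² - (1 - g(τ(m)) + log(1 - g(τ(m))))/2`. -/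
def ptilde (J h m : ℝ) : ℝ :=
  -J * m^2 - (1 - gFun (tauFun J h m) + Real.log (1 - gFun (tauFun J h m))) / 2

/-- The CDF of a centered Gaussian with variance `v`, evaluated at `z`. -/
def gaussCDF (v : ℝ) (z : ℝ) : ℝ :=
  (ProbabilityTheory.gaussianReal 0 (Real.toNNReal v) (Set.Iic z)).toReal

/-- Spin configurations `Σ = {0,1}^N`. -/
abbrev Config (N : ℕ) := Fin N → Bool

/-- `𝓐(σ) = {i : σ_i = 1}`. -/
def ASet {N : ℕ} (σ : Config N) : Finset (Fin N) := Finset.univ.filter fun i => σ i = true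

/-- `M(σ) = ∑ σ_i`. -/
def Msum {N : ℕ} (σ : Config N) : ℕ := (ASet σ).card

/-- Magnetization `m(σ) = M(σ)/N`. -/
def mConf {N : ℕ} (σ : Config N) : ℝ := (Msum σ : ℝ) / N

/-- `D(σ)`: the number of dimer configurations `D` with `𝓜(D) = 𝓐(σ)`. -/
def Dcount (N : ℕ) (σ : Config N) : ℕ :=
  (Finset.univ.filter fun D : Dimer N => monomers D = ASet σ).card

/-- The weight `D(σ) exp(-H(σ))` of the weighted Curie–Weiss model. -/
def wConf (N : ℕ) (J h : ℝ) (σ : Config N) : ℝ :=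
  (Dcount N σ : ℝ) * Real.exp (N * (J * mConf σ ^ 2 + bIMD N J h * mConf σ))

/-- The probability of an event `A` under the weighted Curie–Weiss Gibbs measure. -/
def probConf (N : ℕ) (J h : ℝ) (A : Config N → Prop) : ℝ :=
  (∑ σ : Config N, Set.indicator {σ | A σ} (wConf N J h) σ) / ∑ σ : Config N, wConf N J h σ

/-- Expectation under the weighted Curie–Weiss Gibbs measure. -/
def EConf (N : ℕ) (J h : ℝ) (f : Config N → ℝ) : ℝ :=
  (∑ σ : Config N, wConf N J h σ * f σ) / ∑ σ : Config N, wConf N J h σ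

/-- `L₁(m) = 2(1-m)(m² - (1-m)e^{2τ(m)})/((1-m) + e^{2τ(m)})`. -/
def Lone (J h m : ℝ) : ℝ :=
  2*(1-m)*(m^2 - (1-m)*Real.exp (2 * tauFun J h m)) / ((1-m) + Real.exp (2 * tauFun J h m))

/-- `L₂(m) = 4(1-m)(m² + (1-m)e^{2τ(m)})/((1-m) + e^{2τ(m)})`. -/
def Ltwo (J h m : ℝ) : ℝ :=
  4*(1-m)*(m^2 + (1-m)*Real.exp (2 * tauFun J h m)) / ((1-m) + Real.exp (2 * tauFun J h m))

/-- The configuration obtained from `σ` by setting the spins at `u, v` to `s, t`. -/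
def upd {N : ℕ} (σ : Config N) (u v : Fin N) (s t : Bool) : Config N :=
  fun i => if i = u then s else if i = v then t else σ i

/-- The edges of the complete graph, enumerated as ordered pairs `u < v`. -/
def cEdges (N : ℕ) : Finset (Fin N × Fin N) := Finset.univ.filter fun p => p.1 < p.2

/-- The probability of resampling the pair of spins at `(u,v)` to `(s,t)`:
the conditional distribution of `(σ_u, σ_v)` given `(σ_i)_{i ≠ u,v}`. -/
def qCond (N : ℕ) (J h : ℝ) (σ : Config N) (u v : Fin N) (s t : Bool) : ℝ :=
  wConf N J h (upd σ u v s t) / ∑ st : Bool × Bool, wConf N J h (upd σ u v st.1 st.2)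

/-- `E[F(σ, σ') | σ]` for the exchangeable pair `(σ, σ')` obtained by resampling the
spins at a uniformly chosen edge. -/
def condE2 (N : ℕ) (J h : ℝ) (F : Config N → Config N → ℝ) (σ : Config N) : ℝ :=
  ((cEdges N).card : ℝ)⁻¹ * ∑ p ∈ cEdges N, ∑ st : Bool × Bool,
    qCond N J h σ p.1 p.2 st.1 st.2 * F σ (upd σ p.1 p.2 st.1 st.2)

/-- The weight of the Gibbs measure conditioned on the event `S`. -/
def wCond (N : ℕ) (J h : ℝ) (S : Config N → Prop) (σ : Config N) : ℝ :=
  Set.indicator {σ | S σ} (wConf N J h) σ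

/-- `ℙ_ℓ(A) = ℙ(A | S)`, probability under the conditioned Gibbs measure. -/
def probL (N : ℕ) (J h : ℝ) (S A : Config N → Prop) : ℝ :=
  (∑ σ : Config N, Set.indicator {σ | A σ} (wCond N J h S) σ) / ∑ σ : Config N, wCond N J h S σ

/-- Expectation under the conditioned Gibbs measure `ℙ(·|S)`. -/
def EL (N : ℕ) (J h : ℝ) (S : Config N → Prop) (f : Config N → ℝ) : ℝ :=
  (∑ σ : Config N, wCond N J h S σ * f σ) / ∑ σ : Config N, wCond N J h S σ

/-- Resampling probability for the conditioned measure `ℙ(·|S)`. -/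
def qCondL (N : ℕ) (J h : ℝ) (S : Config N → Prop) (σ : Config N) (u v : Fin N)
    (s t : Bool) : ℝ :=
  wCond N J h S (upd σ u v s t) / ∑ st : Bool × Bool, wCond N J h S (upd σ u v st.1 st.2)

/-- `E_ℓ[F(σ, σ') | σ]` for the exchangeable pair under the conditioned measure. -/
def condE2L (N : ℕ) (J h : ℝ) (S : Config N → Prop) (F : Config N → Config N → ℝ)
    (σ : Config N) : ℝ :=
  ((cEdges N).card : ℝ)⁻¹ * ∑ p ∈ cEdges N, ∑ st : Bool × Bool,
    qCondL N J h S σ p.1 p.2 st.1 st.2 * F σ (upd σ p.1 p.2 st.1 st.2)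

/-- The maximizer set `O` of `𝑝̃` on `[0,1]`. -/
def maxSet (J h : ℝ) : Set ℝ :=
  {x | x ∈ Set.Icc (0:ℝ) 1 ∧ ∀ y ∈ Set.Icc (0:ℝ) 1, ptilde J h y ≤ ptilde J h x}

end

/-!
Removing a dimer `uv` gives `D(σ) = (N - M - 1) D(σ')` when `M(σ') = M(σ) + 2`, so the weights of
two consecutive levels of the right parity satisfy a detailed balance relation with
`e^{2τ}` evaluated at the midpoint of the two magnetizations. Parity forbids resampling a mixed
pair to anything else than a mixed pair, hence only pairs `(1,1)` and `(0,0)` move `M`, and they do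
so with probability `p` or `1 - p`, where `p(x) = (1-x)/((1-x)+e^{2τ(x)})` is Lipschitz and the
midpoint is at distance `1/N` from `m(σ)`. A uniform edge carries such a pair with probability
`m² + O(1/N)` resp. `(1-m)² + O(1/N)`, which gives `L_k` and the errors `R_k`. Conditioning on `S`
leaves the resampling of `σ` unchanged unless some move leads out of `S`, which requires `σ` to be
in the boundary layer; there `T` is bounded because `|M - M'| ≤ 2`.
-/

/-! ### Spin configurations -/

section Spins

variable {N : ℕ}

theorem Msum_eq_sum (σ : Config N) : Msum σ = ∑ i, (σ i).toNat := by
  rw [Msum, ASet, card_filter]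
  exact sum_congr rfl fun i _ => by cases σ i <;> rfl

theorem Msum_le (σ : Config N) : Msum σ ≤ N := by
  simpa [Msum] using card_le_univ (ASet σ)

theorem Msum_update (σ : Config N) (u : Fin N) (s : Bool) :
    Msum (Function.update σ u s) + (σ u).toNat = Msum σ + s.toNat := by
  have hrest : ∑ i ∈ univ.erase u, (Function.update σ u s i).toNat
      = ∑ i ∈ univ.erase u, (σ i).toNat :=
    sum_congr rfl fun i hi => by rw [Function.update_of_ne (ne_of_mem_erase hi)]
  rw [Msum_eq_sum, Msum_eq_sum, ← add_sum_erase _ _ (mem_univ u),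
    ← add_sum_erase _ (fun i => (σ i).toNat) (mem_univ u), hrest, Function.update_self]
  omega

theorem upd_eq_update (σ : Config N) (u v : Fin N) (s t : Bool) :
    upd σ u v s t = Function.update (Function.update σ v t) u s := by
  funext i
  simp only [upd, Function.update_apply]

theorem Msum_upd (σ : Config N) {u v : Fin N} (huv : u ≠ v) (s t : Bool) :
    Msum (upd σ u v s t) + (σ u).toNat + (σ v).toNat = Msum σ + s.toNat + t.toNat := by
  have hu := Msum_update (Function.update σ v t) u s
  have hv := Msum_update σ v t
  rw [Function.update_of_ne huv] at hu
  rw [upd_eq_update]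
  omega

theorem Msum_upd_le (σ : Config N) {u v : Fin N} (huv : u ≠ v) (s t : Bool) :
    Msum (upd σ u v s t) ≤ Msum σ + 2 := by
  have := Msum_upd σ huv s t
  have := s.toNat_le
  have := t.toNat_le
  omega

theorem Msum_le_Msum_upd (σ : Config N) {u v : Fin N} (huv : u ≠ v) (s t : Bool) :
    Msum σ ≤ Msum (upd σ u v s t) + 2 := by
  have := Msum_upd σ huv s t
  have := (σ u).toNat_le
  have := (σ v).toNat_le
  omega

theorem abs_Msum_sub_Msum_upd_le (σ : Config N) {u v : Fin N} (huv : u ≠ v) (s t : Bool) :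
    |(Msum σ : ℝ) - Msum (upd σ u v s t)| ≤ 2 := by
  have hup : (Msum (upd σ u v s t) : ℝ) ≤ Msum σ + 2 := by exact_mod_cast Msum_upd_le σ huv s t
  have hdown : (Msum σ : ℝ) ≤ Msum (upd σ u v s t) + 2 := by
    exact_mod_cast Msum_le_Msum_upd σ huv s t
  rw [abs_le]
  constructor <;> linarith

theorem exists_Msum_eq {n : ℕ} (hn : n ≤ N) : ∃ σ : Config N, Msum σ = n := by
  obtain ⟨A, -, hA⟩ := exists_subset_card_eq (s := (univ : Finset (Fin N))) (by simpa using hn)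
  exact ⟨fun i => decide (i ∈ A), by simp [Msum, ASet, hA]⟩

theorem exists_eq_false_of_Msum_lt {σ : Config N} (hσ : Msum σ < N) : ∃ u, σ u = false := by
  by_contra! hall
  have huniv : ASet σ = univ := by
    ext i
    simpa [ASet] using hall i
  simp [Msum, huniv] at hσ

theorem mConf_mem_Icc (σ : Config N) : mConf σ ∈ Set.Icc (0 : ℝ) 1 :=
  ⟨by unfold mConf; positivity,
    div_le_one_of_le₀ (by exact_mod_cast Msum_le σ) N.cast_nonneg⟩

theorem factorsThrough_mConf {α : Type*} {f : Config N → α} (hf : f.FactorsThrough Msum) :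
    f.FactorsThrough mConf := by
  intro σ σ' hm
  apply hf
  rcases N.eq_zero_or_pos with rfl | hN
  · rw [Subsingleton.elim σ σ']
  · exact_mod_cast (div_left_inj' (by positivity : (N : ℝ) ≠ 0)).mp hm

theorem mConf_upd_lt {ξ : ℝ} (hN : 1 ≤ N) {σ : Config N} (hσ : mConf σ < ξ)
    (hlayer : ¬ (ξ * N - 2 ≤ (Msum σ : ℝ) ∧ (Msum σ : ℝ) < ξ * N)) (u v : Fin N) (huv : u ≠ v)
    (s t : Bool) : mConf (upd σ u v s t) < ξ := by
  rw [mConf, div_lt_iff₀ (by positivity)] at hσ ⊢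
  linarith [(abs_le.mp (abs_Msum_sub_Msum_upd_le σ huv s t)).1,
    not_le.mp fun hle => hlayer ⟨hle, hσ⟩]

theorem lt_mConf_upd {ξ : ℝ} (hN : 1 ≤ N) {σ : Config N} (hσ : ξ < mConf σ)
    (hlayer : ¬ (ξ * N < (Msum σ : ℝ) ∧ (Msum σ : ℝ) ≤ ξ * N + 2)) (u v : Fin N) (huv : u ≠ v)
    (s t : Bool) : ξ < mConf (upd σ u v s t) := by
  rw [mConf, lt_div_iff₀ (by positivity)] at hσ ⊢
  linarith [(abs_le.mp (abs_Msum_sub_Msum_upd_le σ huv s t)).2,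
    not_le.mp fun hle => hlayer ⟨hσ, hle⟩]

end Spins

/-! ### Counting dimer configurations with prescribed monomers -/

section Dimers

variable {N : ℕ} {σ σ' : Config N}

theorem monomers_eq_ASet_iff {D : Dimer N} :
    monomers D = ASet σ ↔ ∀ i, D.1 i = i ↔ σ i = true := by
  simp [Finset.ext_iff, monomers, ASet]

theorem Dcount_congr_perm (e : Equiv.Perm (Fin N)) (he : ∀ i, σ' (e i) = σ i) :
    Dcount N σ = Dcount N σ' := by
  have he' : ∀ i, σ (e.symm i) = σ' i := fun i => by rw [← he, e.apply_symm_apply]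
  refine card_nbij'
    (fun D => ⟨fun i => e (D.1 (e.symm i)), fun i => by simp [D.2]⟩)
    (fun D => ⟨fun i => e.symm (D.1 (e i)), fun i => by simp [D.2]⟩)
    (fun D hD => ?_) (fun D hD => ?_) (fun D _ => by ext; simp) (fun D _ => by ext; simp)
  all_goals
    simp only [coe_filter, mem_univ, true_and, Set.mem_ofPred_eq, monomers_eq_ASet_iff] at hD ⊢
    intro i
  · rw [← he', ← hD, ← Equiv.eq_symm_apply]
  · rw [← he, ← hD, Equiv.symm_apply_eq]

theorem Dcount_factorsThrough_Msum : (Dcount N).FactorsThrough Msum := by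
  intro σ σ' hM
  let e := (equivOfCardEq hM).extendSubtype
  refine Dcount_congr_perm e fun i => ?_
  have hmem : e i ∈ ASet σ' ↔ i ∈ ASet σ :=
    ⟨not_imp_not.mp (Equiv.extendSubtype_not_mem (equivOfCardEq hM) i),
      Equiv.extendSubtype_mem (equivOfCardEq hM) i⟩
  rw [Bool.eq_iff_iff]
  simpa [ASet] using hmem

theorem even_of_Dcount_ne_zero (hσ : Dcount N σ ≠ 0) : Even (N - Msum σ) := by
  obtain ⟨D, hD⟩ := card_ne_zero.mp hσ
  have hinvol : (show Function.End (Fin N) from D.1) ^ 2 ^ 1 = 1 := funext D.2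
  have hfixed : Fintype.card (Function.fixedPoints D.1) = Msum σ := by
    rw [Msum, ← (mem_filter.mp hD).2, Fintype.card_subtype]
    rfl
  have hmod := Equiv.Perm.card_fixedPoints_modEq hinvol
  rw [hfixed, Fintype.card_fin] at hmod
  exact (Nat.modEq_iff_dvd' (Msum_le σ)).mp hmod.symm |> even_iff_two_dvd.mpr

/-- The dimer configuration `D ∘ (u v)`, for a transposition `(u v)` commuting with `D`: it adds
the dimer `uv` to `D` if `u`, `v` are monomers, and removes it if `uv` is a dimer. -/
def Dimer.compSwap (D : Dimer N) (u v : Fin N)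
    (hD : ∀ i, D.1 (Equiv.swap u v i) = Equiv.swap u v (D.1 i)) : Dimer N :=
  ⟨fun i => D.1 (Equiv.swap u v i), fun i => by simp [hD, D.2]⟩

theorem Dimer.apply_swap (D : Dimer N) {u v : Fin N}
    (hD : D.1 u = v ∨ D.1 u = u ∧ D.1 v = v) (i : Fin N) :
    D.1 (Equiv.swap u v i) = Equiv.swap u v (D.1 i) := by
  have hinj : Function.Injective D.1 := Function.Involutive.injective D.2
  have hconj := hinj.swap_apply u v i
  rcases hD with huv | ⟨hu, hv⟩
  · have hvu : D.1 v = u := by rw [← huv, D.2]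
    rw [← hconj, huv, hvu, Equiv.swap_comm]
  · rw [← hconj, hu, hv]

theorem monomers_compSwap_of_dimer {D : Dimer N} {u v : Fin N} (huv : D.1 u = v)
    (hD : monomers D = ASet σ) :
    monomers (D.compSwap u v (D.apply_swap (Or.inl huv))) = ASet (upd σ u v true true) := by
  have hvu : D.1 v = u := by rw [← huv, D.2]
  rw [monomers_eq_ASet_iff] at hD ⊢
  intro i
  rcases eq_or_ne i u with rfl | hiu
  · simp [Dimer.compSwap, upd, hvu]
  rcases eq_or_ne i v with rfl | hiv
  · simp [Dimer.compSwap, upd, huv]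
  simp [Dimer.compSwap, upd, hiu, hiv, Equiv.swap_apply_of_ne_of_ne hiu hiv, hD]

theorem monomers_compSwap_of_monomers {D : Dimer N} {u v : Fin N} (huv : u ≠ v)
    (hu : D.1 u = u) (hv : D.1 v = v) (hσu : σ u = false) (hσv : σ v = false)
    (hD : monomers D = ASet (upd σ u v true true)) :
    monomers (D.compSwap u v (D.apply_swap (Or.inr ⟨hu, hv⟩))) = ASet σ := by
  rw [monomers_eq_ASet_iff] at hD ⊢
  intro i
  rcases eq_or_ne i u with rfl | hiu
  · simp [Dimer.compSwap, hv, hσu, huv.symm]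
  rcases eq_or_ne i v with rfl | hiv
  · simp [Dimer.compSwap, hu, hσv, huv]
  simp [Dimer.compSwap, hiu, hiv, Equiv.swap_apply_of_ne_of_ne hiu hiv, hD, upd]

theorem card_filter_monomers_eq_and_apply_eq {u v : Fin N} (huv : u ≠ v)
    (hu : σ u = false) (hv : σ v = false) :
    (univ.filter fun D : Dimer N => monomers D = ASet σ ∧ D.1 u = v).card
      = Dcount N (upd σ u v true true) := by
  have hfix : ∀ D ∈ univ.filter fun D : Dimer N => monomers D = ASet (upd σ u v true true),
      D.1 u = u ∧ D.1 v = v := fun D hD => by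
    have hD' := monomers_eq_ASet_iff.mp (mem_filter.mp hD).2
    exact ⟨(hD' u).mpr (by simp [upd]), (hD' v).mpr (by simp [upd])⟩
  refine card_bij'
    (fun D hD => D.compSwap u v (D.apply_swap (Or.inl (mem_filter.mp hD).2.2)))
    (fun D hD => D.compSwap u v (D.apply_swap (Or.inr (hfix D hD))))
    (fun D hD => ?_) (fun D hD => ?_)
    (fun D _ => by ext; simp [Dimer.compSwap]) (fun D _ => by ext; simp [Dimer.compSwap])
  · rw [mem_filter_univ] at hD ⊢
    exact monomers_compSwap_of_dimer hD.2 hD.1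
  · obtain ⟨hDu, hDv⟩ := hfix D hD
    rw [mem_filter_univ] at hD ⊢
    exact ⟨monomers_compSwap_of_monomers huv hDu hDv hu hv hD, by simp [Dimer.compSwap, hDv]⟩

theorem Dimer.apply_mem_compl_erase {D : Dimer N} (hD : monomers D = ASet σ) {u : Fin N}
    (hu : σ u = false) : D.1 u ∈ (ASet σ)ᶜ.erase u := by
  rw [monomers_eq_ASet_iff] at hD
  have hne : D.1 u ≠ u := fun hfix => by simp [(hD u).mp hfix] at hu
  have hfalse : σ (D.1 u) ≠ true := fun htrue => hne ((D.2 u ▸ (hD _).mpr htrue).symm)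
  simpa [ASet, hne] using hfalse

theorem Dcount_eq_mul_Dcount (hM : Msum σ' = Msum σ + 2) :
    Dcount N σ = (N - Msum σ - 1) * Dcount N σ' := by
  obtain ⟨u, hu⟩ : ∃ u, σ u = false :=
    exists_eq_false_of_Msum_lt (by have := Msum_le σ'; omega)
  have hmaps : Set.MapsTo (fun D : Dimer N => D.1 u)
      (univ.filter fun D : Dimer N => monomers D = ASet σ : Finset (Dimer N))
      ((ASet σ)ᶜ.erase u : Finset (Fin N)) := fun D hD =>
    Dimer.apply_mem_compl_erase (mem_filter.mp hD).2 hu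
  have hfiber : ∀ v ∈ (ASet σ)ᶜ.erase u,
      ((univ.filter fun D : Dimer N => monomers D = ASet σ).filter fun D => D.1 u = v).card
        = Dcount N σ' := by
    intro v hv
    have hvu : v ≠ u := ne_of_mem_erase hv
    have hv' : σ v = false := by simpa [ASet] using mem_of_mem_erase hv
    rw [filter_filter, card_filter_monomers_eq_and_apply_eq hvu.symm hu hv']
    refine Dcount_factorsThrough_Msum ?_
    have := Msum_upd σ hvu.symm true true
    simp only [hu, hv', Bool.toNat_false, Bool.toNat_true] at this
    omega
  rw [Dcount, card_eq_sum_card_fiberwise hmaps, sum_congr rfl hfiber, sum_const, smul_eq_mul,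
    card_erase_of_mem (by simp [ASet, hu]), card_compl, Fintype.card_fin, Msum]

end Dimers

/-! ### Gibbs weights -/

section Weights

variable {N : ℕ} (J h : ℝ)

theorem wConf_nonneg (σ : Config N) : 0 ≤ wConf N J h σ := by
  unfold wConf
  positivity

theorem wConf_factorsThrough_Msum : (wConf N J h).FactorsThrough Msum := fun σ σ' hM => by
  simp only [wConf, mConf, Dcount_factorsThrough_Msum hM, hM]

theorem even_of_wConf_ne_zero {J h : ℝ} {σ : Config N} (hσ : wConf N J h σ ≠ 0) :
    Even (N - Msum σ) :=
  even_of_Dcount_ne_zero fun hzero => hσ (by simp [wConf, hzero])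

theorem wCond_nonneg (S : Config N → Prop) (σ : Config N) : 0 ≤ wCond N J h S σ :=
  Set.indicator_nonneg (fun _ _ => wConf_nonneg J h _) σ

theorem wCond_factorsThrough_Msum {S : Config N → Prop} (hS : S.FactorsThrough Msum) :
    (wCond N J h S).FactorsThrough Msum := fun σ σ' hM => by
  classical
  simp only [wCond, Set.indicator_apply, Set.mem_ofPred_eq, hS hM, wConf_factorsThrough_Msum J h hM]

-- Evaluating `τ` at the midpoint of the two magnetizations absorbs the second-order term of `H`.
theorem wConf_mul_one_sub {σ σ' : Config N} (hM : Msum σ' = Msum σ + 2) {x : ℝ}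
    (hx : x = (Msum σ + 1) / N) :
    wConf N J h σ' * (1 - x) = wConf N J h σ * Real.exp (2 * tauFun J h x) := by
  have hle := Msum_le σ'
  have hN : (0 : ℝ) < N := by exact_mod_cast (by omega : 0 < N)
  have hcast : ((N - Msum σ - 1 : ℕ) : ℝ) = N * (1 - x) := by
    rw [Nat.cast_sub (by omega), Nat.cast_sub (by omega), Nat.cast_one, hx]
    field_simp
    ring
  have hexp : Real.exp (N * (J * mConf σ' ^ 2 + bIMD N J h * mConf σ'))
      = Real.exp (N * (J * mConf σ ^ 2 + bIMD N J h * mConf σ))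
        * (N * Real.exp (2 * tauFun J h x)) := by
    nth_rewrite 3 [← Real.exp_log hN]
    rw [← Real.exp_add, ← Real.exp_add]
    congr 1
    simp only [mConf, hM, bIMD, tauFun, hx]
    push_cast
    field_simp
    ring
  rw [wConf, wConf, Dcount_eq_mul_Dcount hM, Nat.cast_mul, hcast, hexp]
  ring

/-- The common value `W σ` over the configurations `σ` with `n` up spins, for a weight `W` that
depends on `σ` only through `Msum σ`; it is `0` for `n > N`. -/
noncomputable def levelWeight (W : Config N → ℝ) : ℕ → ℝ :=
  Function.extend Msum W 0

theorem levelWeight_Msum {W : Config N → ℝ} (hW : W.FactorsThrough Msum) (σ : Config N) :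
    levelWeight W (Msum σ) = W σ :=
  hW.extend_apply 0 σ

theorem levelWeight_wConf_nonneg {n : ℕ} (hn : n ≤ N) : 0 ≤ levelWeight (wConf N J h) n := by
  obtain ⟨σ, rfl⟩ := exists_Msum_eq hn
  rw [levelWeight_Msum (wConf_factorsThrough_Msum J h)]
  exact wConf_nonneg J h σ

theorem levelWeight_wConf_mul_one_sub {n : ℕ} (hn : n + 2 ≤ N) {x : ℝ} (hx : x = (n + 1) / N) :
    levelWeight (wConf N J h) (n + 2) * (1 - x)
      = levelWeight (wConf N J h) n * Real.exp (2 * tauFun J h x) := by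
  obtain ⟨σ, rfl⟩ := exists_Msum_eq (show n ≤ N by omega)
  obtain ⟨σ', hσ'⟩ := exists_Msum_eq hn
  rw [← hσ', levelWeight_Msum (wConf_factorsThrough_Msum J h),
    levelWeight_Msum (wConf_factorsThrough_Msum J h)]
  exact wConf_mul_one_sub J h hσ' hx

theorem even_of_levelWeight_wConf_ne_zero {J h : ℝ} {n : ℕ} (hn : n ≤ N)
    (hw : levelWeight (wConf N J h) n ≠ 0) : Even (N - n) := by
  obtain ⟨σ, rfl⟩ := exists_Msum_eq hn
  exact even_of_wConf_ne_zero (by rwa [levelWeight_Msum (wConf_factorsThrough_Msum J h)] at hw)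

theorem levelWeight_wConf_eq_zero_or {n : ℕ} (hn : n + 1 ≤ N) :
    levelWeight (wConf N J h) n = 0 ∨ levelWeight (wConf N J h) (n + 1) = 0 := by
  by_contra! hne
  have heven := even_of_levelWeight_wConf_ne_zero (by omega) hne.1
  have heven' := even_of_levelWeight_wConf_ne_zero hn hne.2
  rw [Nat.even_iff] at heven heven'
  omega

/-- The limiting probability, at magnetization `x`, that a resampled pair of spins ends up as
`(0, 0)`, given that it ends up in `{(0, 0), (1, 1)}`. -/
noncomputable def pairDownProb (J h x : ℝ) : ℝ :=
  (1 - x) / ((1 - x) + Real.exp (2 * tauFun J h x))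

theorem one_sub_add_exp_pos {x : ℝ} (hx : x ≤ 1) : 0 < (1 - x) + Real.exp (2 * tauFun J h x) :=
  add_pos_of_nonneg_of_pos (sub_nonneg.mpr hx) (Real.exp_pos _)

theorem pairDownProb_mem_Icc {x : ℝ} (hx : x ≤ 1) : pairDownProb J h x ∈ Set.Icc (0 : ℝ) 1 := by
  have hden := one_sub_add_exp_pos J h hx
  exact ⟨div_nonneg (sub_nonneg.mpr hx) hden.le,
    div_le_one_of_le₀ (le_add_of_nonneg_right (Real.exp_pos _).le) hden.le⟩

theorem exists_lipschitzOnWith_pairDownProb :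
    ∃ L, LipschitzOnWith L (pairDownProb J h) (Set.Icc 0 1) := by
  have hsmooth : ContDiffOn ℝ 1 (pairDownProb J h) (Set.Icc 0 1) := by
    unfold pairDownProb
    exact ContDiffOn.div (by fun_prop) (by unfold tauFun; fun_prop)
      fun x hx => (one_sub_add_exp_pos J h hx.2).ne'
  exact hsmooth.exists_lipschitzOnWith one_ne_zero (convex_Icc 0 1) isCompact_Icc

theorem div_add_eq_div_add_of_mul_eq_mul {w w' a b : ℝ} (ha : 0 < a) (hb : 0 < b)
    (hbal : w' * a = w * b) (hw : w ≠ 0 ∨ w' ≠ 0) : w / (w + w') = a / (a + b) := by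
  have hw' : w' = w * b / a := by rw [← hbal]; field_simp
  have hw₀ : w ≠ 0 := hw.elim id fun hne hzero => hne (by simp [hw', hzero])
  rw [hw']
  field_simp

theorem levelWeight_wConf_div_add {J h : ℝ} {n : ℕ} (hn : n + 2 ≤ N)
    (hw : levelWeight (wConf N J h) n ≠ 0 ∨ levelWeight (wConf N J h) (n + 2) ≠ 0) :
    levelWeight (wConf N J h) n
        / (levelWeight (wConf N J h) n + levelWeight (wConf N J h) (n + 2))
      = pairDownProb J h ((n + 1) / N) := by
  have hN : (0 : ℝ) < N := by exact_mod_cast (by omega : 0 < N)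
  have hlt : (n + 1 : ℝ) / N < 1 := by
    rw [div_lt_one hN]
    exact_mod_cast hn
  exact div_add_eq_div_add_of_mul_eq_mul (sub_pos.mpr hlt) (Real.exp_pos _)
    (levelWeight_wConf_mul_one_sub J h hn rfl) hw

end Weights

/-! ### Resampling a pair of spins -/

section Resampling

variable {N : ℕ} {W W' : Config N → ℝ}

/-- `E[F(σ, σ') | σ]` when the spins at a uniform edge are resampled from the weight `W`. With
`W = wConf N J h` this is `condE2`, and with `W = wCond N J h S` it is `condE2L`. -/
noncomputable def resampleMean (W : Config N → ℝ) (F : Config N → Config N → ℝ)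
    (σ : Config N) : ℝ :=
  ((cEdges N).card : ℝ)⁻¹ * ∑ p ∈ cEdges N, ∑ st : Bool × Bool,
    W (upd σ p.1 p.2 st.1 st.2) / (∑ st : Bool × Bool, W (upd σ p.1 p.2 st.1 st.2))
      * F σ (upd σ p.1 p.2 st.1 st.2)

theorem ne_of_mem_cEdges {p : Fin N × Fin N} (hp : p ∈ cEdges N) : p.1 ≠ p.2 :=
  (mem_filter.mp hp).2.ne

theorem resampleMean_congr (F : Config N → Config N → ℝ) {σ : Config N}
    (hW : ∀ u v : Fin N, u ≠ v → ∀ s t, W (upd σ u v s t) = W' (upd σ u v s t)) :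
    resampleMean W F σ = resampleMean W' F σ := by
  unfold resampleMean
  congr 1
  refine sum_congr rfl fun p hp => ?_
  simp only [hW _ _ (ne_of_mem_cEdges hp)]

theorem abs_sum_div_sum_mul_le {ι : Type*} (s : Finset ι) {w f : ι → ℝ} {C : ℝ} (hC : 0 ≤ C)
    (hw : ∀ i ∈ s, 0 ≤ w i) (hf : ∀ i ∈ s, |f i| ≤ C) :
    |∑ i ∈ s, w i / (∑ j ∈ s, w j) * f i| ≤ C := by
  have hprob : ∀ i ∈ s, 0 ≤ w i / ∑ j ∈ s, w j := fun i hi =>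
    div_nonneg (hw i hi) (sum_nonneg hw)
  calc |∑ i ∈ s, w i / (∑ j ∈ s, w j) * f i|
      ≤ ∑ i ∈ s, w i / (∑ j ∈ s, w j) * C := (abs_sum_le_sum_abs _ _).trans <|
        sum_le_sum fun i hi => by
          rw [abs_mul, abs_of_nonneg (hprob i hi)]
          exact mul_le_mul_of_nonneg_left (hf i hi) (hprob i hi)
    _ ≤ C := by
        rw [← sum_mul, ← sum_div]
        exact mul_le_of_le_one_left hC (div_self_le_one _)

theorem abs_resampleMean_le (hW : ∀ σ, 0 ≤ W σ) {F : Config N → Config N → ℝ} {σ : Config N}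
    {C : ℝ} (hC : 0 ≤ C) (hF : ∀ u v : Fin N, u ≠ v → ∀ s t, |F σ (upd σ u v s t)| ≤ C) :
    |resampleMean W F σ| ≤ C := by
  have hpair : ∀ p ∈ cEdges N, |∑ st : Bool × Bool,
      W (upd σ p.1 p.2 st.1 st.2) / (∑ st : Bool × Bool, W (upd σ p.1 p.2 st.1 st.2))
        * F σ (upd σ p.1 p.2 st.1 st.2)| ≤ C := fun p hp =>
    abs_sum_div_sum_mul_le univ hC (fun _ _ => hW _) fun _ _ => hF _ _ (ne_of_mem_cEdges hp) _ _
  have hsum := (abs_sum_le_sum_abs _ _).trans (sum_le_card_nsmul _ _ C hpair)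
  rw [nsmul_eq_mul] at hsum
  rw [resampleMean, abs_mul, abs_of_nonneg (by positivity)]
  calc _ ≤ ((cEdges N).card : ℝ)⁻¹ * ((cEdges N).card * C) := by gcongr
    _ ≤ C := by
        rw [← mul_assoc]
        exact mul_le_of_le_one_left hC inv_mul_le_one

theorem two_mul_sum_cEdges_add {f : Fin N → Fin N → ℝ} (hf : ∀ u v, f u v = f v u) :
    2 * ∑ p ∈ cEdges N, f p.1 p.2 + ∑ u, f u u = ∑ u, ∑ v, f u v := by
  have hlt : ∑ p ∈ cEdges N, f p.1 p.2 = ∑ u, ∑ v, if u < v then f u v else 0 := by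
    rw [cEdges, sum_filter, Fintype.sum_prod_type]
  have hgt : ∑ p ∈ cEdges N, f p.1 p.2 = ∑ u, ∑ v, if v < u then f u v else 0 := by
    rw [hlt, sum_comm]
    simp only [hf]
  have heq : ∑ u, f u u = ∑ u, ∑ v, if u = v then f u v else 0 := by
    simp only [sum_ite_eq, mem_univ, if_true]
  rw [two_mul]
  nth_rewrite 1 [hlt]
  rw [hgt, heq]
  simp only [← sum_add_distrib]
  refine sum_congr rfl fun u _ => sum_congr rfl fun v _ => ?_
  rcases lt_trichotomy u v with huv | huv | huv
  · simp [huv, huv.not_gt, huv.ne]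
  · simp [huv]
  · simp [huv, huv.not_gt, huv.ne']

theorem card_cEdges : ((cEdges N).card : ℝ) = N * (N - 1) / 2 := by
  have hpairs := two_mul_sum_cEdges_add (N := N) (f := fun _ _ => 1) fun _ _ => rfl
  simp only [sum_const, card_univ, Fintype.card_fin, nsmul_eq_mul, mul_one] at hpairs
  linarith

theorem sum_spin (σ : Config N) (f : Bool → ℝ) :
    ∑ u, f (σ u) = Msum σ * f true + (N - Msum σ) * f false := by
  have hspin : ∀ u, f (σ u) = ((σ u).toNat : ℝ) * (f true - f false) + f false := by
    intro u
    cases σ u <;> simp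
  simp only [hspin, sum_add_distrib, ← sum_mul, ← Nat.cast_sum, ← Msum_eq_sum, sum_const,
    card_univ, Fintype.card_fin, nsmul_eq_mul]
  ring

theorem sum_cEdges_spin (σ : Config N) {f : Bool → Bool → ℝ} (hf : ∀ a b, f a b = f b a) :
    ∑ p ∈ cEdges N, f (σ p.1) (σ p.2)
      = (Msum σ * (Msum σ - 1) * f true true
        + (N - Msum σ) * (N - Msum σ - 1) * f false false
        + 2 * Msum σ * (N - Msum σ) * f true false) / 2 := by
  have hpairs := two_mul_sum_cEdges_add (f := fun u v => f (σ u) (σ v)) fun u v => hf _ _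
  simp only [sum_spin σ (fun a => f a a), fun u => sum_spin σ (f (σ u)),
    sum_spin σ (fun a => Msum σ * f a true + (N - Msum σ) * f a false), hf false true] at hpairs
  linarith

/-- The probability `n(n-1)/(N(N-1))` that both ends of a uniform edge of the complete graph on
`N` vertices lie in a given set of `n` vertices, with the junk value `0` for `N = 0` and `N = 1`. -/
noncomputable def pairDensity (N n : ℝ) : ℝ :=
  n * (n - 1) / (N * (N - 1))

/-- The conditional mean of `φ(M - M')` when a pair with `c` up spins is resampled, `n` is the
number of up spins outside the pair, and a configuration with `l` up spins has weight `g l`. -/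
noncomputable def pairMean (g : ℕ → ℝ) (φ : ℝ → ℝ) (n c : ℕ) : ℝ :=
  (g n * φ c + 2 * (g (n + 1) * φ (c - 1)) + g (n + 2) * φ (c - 2))
    / (g n + 2 * g (n + 1) + g (n + 2))

theorem sum_resample_eq_pairMean (hW : W.FactorsThrough Msum) (φ : ℝ → ℝ) (σ : Config N)
    {u v : Fin N} (huv : u ≠ v) :
    ∑ st : Bool × Bool, W (upd σ u v st.1 st.2) / (∑ st : Bool × Bool, W (upd σ u v st.1 st.2))
        * φ ((Msum σ : ℝ) - Msum (upd σ u v st.1 st.2))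
      = pairMean (levelWeight W) φ (Msum σ - ((σ u).toNat + (σ v).toNat))
          ((σ u).toNat + (σ v).toNat) := by
  have hdown : Msum (upd σ u v false false) + ((σ u).toNat + (σ v).toNat) = Msum σ := by
    simpa [add_assoc] using Msum_upd σ huv false false
  set n := Msum σ - ((σ u).toNat + (σ v).toNat)
  have hM : (Msum σ : ℝ) = n + ((σ u).toNat + (σ v).toNat : ℕ) := by
    exact_mod_cast (by omega : Msum σ = n + ((σ u).toNat + (σ v).toNat))
  have hupd : ∀ s t, Msum (upd σ u v s t) = n + (s.toNat + t.toNat) := fun s t => by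
    have := Msum_upd σ huv s t
    omega
  simp only [pairMean, ← levelWeight_Msum hW, hupd, hM, Fintype.sum_prod_type,
    Fintype.sum_bool, Bool.toNat_true, Bool.toNat_false]
  push_cast
  ring_nf

theorem resampleMean_eq (hW : W.FactorsThrough Msum) (φ : ℝ → ℝ) (σ : Config N) :
    resampleMean W (fun σ σ' => φ ((Msum σ : ℝ) - Msum σ')) σ
      = pairDensity N (Msum σ) * pairMean (levelWeight W) φ (Msum σ - 2) 2
        + pairDensity N (N - Msum σ) * pairMean (levelWeight W) φ (Msum σ) 0
        + 2 * Msum σ * (N - Msum σ) / (N * (N - 1))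
          * pairMean (levelWeight W) φ (Msum σ - 1) 1 := by
  rw [resampleMean, sum_congr rfl fun p hp =>
      sum_resample_eq_pairMean hW φ σ (ne_of_mem_cEdges hp),
    sum_cEdges_spin σ (f := fun a b => pairMean (levelWeight W) φ
      (Msum σ - (a.toNat + b.toNat)) (a.toNat + b.toNat)) (fun a b => by rw [add_comm]),
    card_cEdges, inv_div, pairDensity, pairDensity]
  simp only [Bool.toNat_true, Bool.toNat_false, add_zero, Nat.reduceAdd, Nat.sub_zero]
  ring

theorem resampleMean_factorsThrough_Msum (hW : W.FactorsThrough Msum) (φ : ℝ → ℝ) :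
    (resampleMean W fun σ σ' => φ ((Msum σ : ℝ) - Msum σ')).FactorsThrough Msum :=
  fun σ σ' hM => by simp only [resampleMean_eq hW, hM]

end Resampling

/-! ### The unconditioned moments -/

section Moments

variable {N : ℕ} {J h : ℝ} {φ : ℝ → ℝ}

theorem pairMean_wConf (φ : ℝ → ℝ) {n : ℕ} (c : ℕ) (hn : n + 2 ≤ N)
    (hw : levelWeight (wConf N J h) n ≠ 0 ∨ levelWeight (wConf N J h) (n + 2) ≠ 0) :
    pairMean (levelWeight (wConf N J h)) φ n c
      = pairDownProb J h ((n + 1) / N) * φ c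
        + (1 - pairDownProb J h ((n + 1) / N)) * φ (c - 2) := by
  have hmid : levelWeight (wConf N J h) (n + 1) = 0 := by
    rcases hw with hw | hw
    · exact (levelWeight_wConf_eq_zero_or J h (by omega)).resolve_left hw
    · exact (levelWeight_wConf_eq_zero_or J h (n := n + 1) hn).resolve_right hw
  have hne : levelWeight (wConf N J h) n + levelWeight (wConf N J h) (n + 2) ≠ 0 := by
    rw [ne_eq, add_eq_zero_iff_of_nonneg (levelWeight_wConf_nonneg J h (by omega))
      (levelWeight_wConf_nonneg J h hn)]
    tauto
  rw [← levelWeight_wConf_div_add hn hw, pairMean, hmid, mul_zero, zero_mul, mul_zero, add_zero,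
    add_zero]
  field_simp
  ring

theorem pairMean_wConf_eq_zero (hφ : φ 0 = 0) {n : ℕ} (hn : n + 2 ≤ N)
    (hw : levelWeight (wConf N J h) (n + 1) ≠ 0) :
    pairMean (levelWeight (wConf N J h)) φ n 1 = 0 := by
  have hdown := (levelWeight_wConf_eq_zero_or J h (by omega)).resolve_right hw
  have hup := (levelWeight_wConf_eq_zero_or J h (n := n + 1) hn).resolve_left hw
  simp [pairMean, hdown, hup, hφ]

theorem condE2_eq (hφ : φ 0 = 0) {σ : Config N} (hσ : wConf N J h σ ≠ 0) :
    condE2 N J h (fun σ σ' => φ ((Msum σ : ℝ) - Msum σ')) σ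
      = pairDensity N (Msum σ) * (pairDownProb J h ((Msum σ - 1) / N) * φ 2)
        + pairDensity N (N - Msum σ)
          * ((1 - pairDownProb J h ((Msum σ + 1) / N)) * φ (-2)) := by
  have hW := wConf_factorsThrough_Msum (N := N) J h
  rw [← levelWeight_Msum hW] at hσ
  have hle := Msum_le σ
  refine (resampleMean_eq hW φ σ).trans ?_
  generalize Msum σ = M at *
  have hup : pairDensity N M * pairMean (levelWeight (wConf N J h)) φ (M - 2) 2
      = pairDensity N M * (pairDownProb J h ((M - 1) / N) * φ 2) := by
    match M with
    | 0 | 1 => simp [pairDensity]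
    | n + 2 =>
      rw [Nat.add_sub_cancel, pairMean_wConf φ 2 hle (Or.inr hσ)]
      push_cast
      rw [sub_self, hφ, mul_zero, add_zero, add_sub_assoc, show (2 : ℝ) - 1 = 1 by norm_num]
  have hdown : pairDensity N (N - M) * pairMean (levelWeight (wConf N J h)) φ M 0
      = pairDensity N (N - M) * ((1 - pairDownProb J h ((M + 1) / N)) * φ (-2)) := by
    rcases (by omega : N = M ∨ N = M + 1 ∨ M + 2 ≤ N) with hN | hN | hN
    · simp [pairDensity, hN]
    · simp [pairDensity, hN]
    · rw [pairMean_wConf φ 0 hN (Or.inl hσ), Nat.cast_zero, hφ, mul_zero, zero_add, zero_sub]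
  have hmixed : 2 * M * (N - M) / (N * (N - 1)) * pairMean (levelWeight (wConf N J h)) φ (M - 1) 1
      = (0 : ℝ) := by
    match M with
    | 0 => simp
    | n + 1 =>
      rcases hle.eq_or_lt with hN | hN
      · simp [← hN]
      · rw [Nat.add_sub_cancel, pairMean_wConf_eq_zero hφ hN hσ, mul_zero]
  rw [hup, hdown, hmixed, add_zero]

/-- The limit of `E[φ(M - M') | σ]` as `N → ∞` at magnetization `m`. -/
noncomputable def limitMean (J h : ℝ) (φ : ℝ → ℝ) (m : ℝ) : ℝ :=
  m ^ 2 * (pairDownProb J h m * φ 2) + (1 - m) ^ 2 * ((1 - pairDownProb J h m) * φ (-2))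

theorem limitMean_pow_one {m : ℝ} (hm : m ≤ 1) : limitMean J h (· ^ 1) m = Lone J h m := by
  have hne := (one_sub_add_exp_pos J h hm).ne'
  unfold Lone limitMean pairDownProb
  field_simp
  ring

theorem limitMean_pow_two {m : ℝ} (hm : m ≤ 1) : limitMean J h (· ^ 2) m = Ltwo J h m := by
  have hne := (one_sub_add_exp_pos J h hm).ne'
  unfold Ltwo limitMean pairDownProb
  field_simp
  ring

theorem abs_pairDensity_sub_sq_le {n : ℕ} (hN : 1 ≤ N) (hn : n ≤ N) :
    |pairDensity N n - (n / N : ℝ) ^ 2| ≤ 1 / N := by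
  rcases n.eq_zero_or_pos with rfl | hn₀
  · simp [pairDensity]
  rcases hN.eq_or_lt with rfl | hN
  · simp [pairDensity, (by omega : n = 1)]
  have hN₁ : (0 : ℝ) < N - 1 := sub_pos.mpr (by exact_mod_cast hN)
  have hnN : (0 : ℝ) ≤ N - n := sub_nonneg.mpr (by exact_mod_cast hn)
  have hn₁ : (1 : ℝ) ≤ n := by exact_mod_cast hn₀
  have hdiff : (n / N : ℝ) ^ 2 - pairDensity N n = n * (N - n) / (N * (N - 1)) / N := by
    unfold pairDensity
    field_simp
    ring
  rw [abs_sub_comm, hdiff, abs_of_nonneg (by positivity)]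
  gcongr
  exact div_le_one_of_le₀ (by gcongr) (by positivity)

theorem pairDensity_mem_Icc {N n : ℝ} (hn : 1 ≤ n) (hnN : n ≤ N) :
    pairDensity N n ∈ Set.Icc (0 : ℝ) 1 := by
  have hn₁ : 0 ≤ n * (n - 1) := mul_nonneg (by linarith) (sub_nonneg.mpr hn)
  have hN₁ : 0 ≤ N - 1 := sub_nonneg.mpr (hn.trans hnN)
  have hN₀ : 0 ≤ N := by linarith
  exact ⟨div_nonneg hn₁ (by positivity), div_le_one_of_le₀ (by gcongr) (by positivity)⟩

theorem abs_pairDensity_mul_sub_le {f : ℝ → ℝ} {L : NNReal}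
    (hf : LipschitzOnWith L f (Set.Icc 0 1)) (hf₁ : ∀ x ∈ Set.Icc (0 : ℝ) 1, |f x| ≤ 1)
    {n : ℕ} (hN : 1 ≤ N) (hn : n ≤ N) {x y : ℝ} (hx : x ∈ Set.Icc (0 : ℝ) 1)
    (hy : 2 ≤ n → y ∈ Set.Icc (0 : ℝ) 1) (hyx : |y - x| ≤ 1 / N) :
    |pairDensity N n * f y - (n / N : ℝ) ^ 2 * f x| ≤ (1 + L : ℝ) / N := by
  have hmove : |pairDensity N n * (f y - f x)| ≤ L / N := by
    rcases lt_or_ge n 2 with hn₂ | hn₂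
    · have hzero : pairDensity N n = 0 := by
        interval_cases n <;> simp [pairDensity]
      rw [hzero, zero_mul, abs_zero]
      positivity
    · have hdens : pairDensity N n ∈ Set.Icc (0 : ℝ) 1 :=
        pairDensity_mem_Icc (by exact_mod_cast (by omega : 1 ≤ n)) (by exact_mod_cast hn)
      rw [abs_mul, abs_of_nonneg hdens.1]
      calc pairDensity N n * |f y - f x| ≤ 1 * (L * |y - x|) := by
            gcongr
            exacts [hdens.2, hf.dist_le_mul y (hy hn₂) x hx]
        _ ≤ L / N := by
            rw [one_mul, div_eq_mul_one_div]
            gcongr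
  have hdens : |(pairDensity N n - (n / N : ℝ) ^ 2) * f x| ≤ 1 / N := by
    rw [abs_mul]
    exact (mul_le_of_le_one_right (abs_nonneg _) (hf₁ x hx)).trans
      (abs_pairDensity_sub_sq_le hN hn)
  calc |pairDensity N n * f y - (n / N : ℝ) ^ 2 * f x|
      = |(pairDensity N n - (n / N : ℝ) ^ 2) * f x + pairDensity N n * (f y - f x)| := by ring_nf
    _ ≤ 1 / N + L / N := (abs_add_le _ _).trans (add_le_add hdens hmove)
    _ = (1 + L) / N := by rw [add_div]

theorem abs_pairDensity_mul_pairDownProb_sub_le {L : NNReal}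
    (hL : LipschitzOnWith L (pairDownProb J h) (Set.Icc 0 1)) (hN : 1 ≤ N) (σ : Config N) :
    |pairDensity N (Msum σ) * pairDownProb J h ((Msum σ - 1) / N)
      - mConf σ ^ 2 * pairDownProb J h (mConf σ)| ≤ (1 + L : ℝ) / N := by
  have hM : (Msum σ : ℝ) ≤ N := by exact_mod_cast Msum_le σ
  refine abs_pairDensity_mul_sub_le hL (fun x hx => ?_) hN (Msum_le σ) (mConf_mem_Icc σ)
    (fun hM₂ => ⟨?_, ?_⟩) ?_
  · have hp := pairDownProb_mem_Icc J h hx.2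
    exact (abs_of_nonneg hp.1).trans_le hp.2
  · have hM₁ : (1 : ℝ) ≤ Msum σ := by exact_mod_cast one_le_two.trans hM₂
    exact div_nonneg (sub_nonneg.mpr hM₁) N.cast_nonneg
  · exact div_le_one_of_le₀ (by linarith) N.cast_nonneg
  · rw [mConf, ← sub_div]
    simp [abs_div]

theorem abs_pairDensity_mul_one_sub_pairDownProb_sub_le {L : NNReal}
    (hL : LipschitzOnWith L (pairDownProb J h) (Set.Icc 0 1)) (hN : 1 ≤ N) (σ : Config N) :
    |pairDensity N (N - Msum σ) * (1 - pairDownProb J h ((Msum σ + 1) / N))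
      - (1 - mConf σ) ^ 2 * (1 - pairDownProb J h (mConf σ))| ≤ (1 + L : ℝ) / N := by
  have hL' : LipschitzOnWith L (fun x => 1 - pairDownProb J h x) (Set.Icc 0 1) := by
    simpa using (LipschitzWith.const (1 : ℝ)).lipschitzOnWith.sub hL
  have hfrac : 1 - mConf σ = (N - Msum σ : ℕ) / N := by
    rw [mConf, Nat.cast_sub (Msum_le σ)]
    field_simp
  rw [hfrac, ← Nat.cast_sub (Msum_le σ)]
  refine abs_pairDensity_mul_sub_le hL' (fun x hx => ?_) hN (Nat.sub_le _ _) (mConf_mem_Icc σ)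
    (fun hM₂ => ⟨by positivity, ?_⟩) ?_
  · have hp := pairDownProb_mem_Icc J h hx.2
    exact abs_le.mpr ⟨by linarith [hp.2], by linarith [hp.1]⟩
  · exact div_le_one_of_le₀ (by exact_mod_cast (by omega : Msum σ + 1 ≤ N)) N.cast_nonneg
  · rw [mConf, ← sub_div]
    simp

theorem abs_condE2_sub_limitMean_le {L : NNReal}
    (hL : LipschitzOnWith L (pairDownProb J h) (Set.Icc 0 1)) (hN : 1 ≤ N) (hφ : φ 0 = 0)
    {B : ℝ} (hB : ∀ x, |x| ≤ 2 → |φ x| ≤ B) {σ : Config N} (hσ : wConf N J h σ ≠ 0) :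
    |condE2 N J h (fun σ σ' => φ ((Msum σ : ℝ) - Msum σ')) σ - limitMean J h φ (mConf σ)|
      ≤ 2 * (1 + L) * B / N := by
  have hup := abs_pairDensity_mul_pairDownProb_sub_le hL hN σ
  have hdown := abs_pairDensity_mul_one_sub_pairDownProb_sub_le hL hN σ
  rw [condE2_eq hφ hσ, limitMean]
  calc _ = |(pairDensity N (Msum σ) * pairDownProb J h ((Msum σ - 1) / N)
            - mConf σ ^ 2 * pairDownProb J h (mConf σ)) * φ 2
          + (pairDensity N (N - Msum σ) * (1 - pairDownProb J h ((Msum σ + 1) / N))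
            - (1 - mConf σ) ^ 2 * (1 - pairDownProb J h (mConf σ))) * φ (-2)| := by ring_nf
    _ ≤ (1 + L) / N * B + (1 + L) / N * B := by
        refine (abs_add_le _ _).trans ?_
        rw [abs_mul, abs_mul]
        gcongr
        exacts [hB 2 (by norm_num), hB (-2) (by norm_num)]
    _ = 2 * (1 + L) * B / N := by ring

end Moments

/-! ### Conditioning on an event -/

section Conditioning

variable {N : ℕ} {J h : ℝ} {S A : Config N → Prop}

theorem probL_nonneg : 0 ≤ probL N J h S A :=
  div_nonneg (sum_nonneg fun σ _ => Set.indicator_nonneg (fun _ _ => wCond_nonneg J h S _) σ)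
    (sum_nonneg fun σ _ => wCond_nonneg J h S σ)

theorem EL_le_mul_probL {f : Config N → ℝ} {K : ℝ} (hzero : ∀ σ, S σ → ¬ A σ → f σ ≤ 0)
    (hle : ∀ σ, f σ ≤ K) : EL N J h S f ≤ K * probL N J h S A := by
  classical
  rw [EL, probL, ← mul_div_assoc, mul_sum]
  refine div_le_div_of_nonneg_right (sum_le_sum fun σ _ => ?_)
    (sum_nonneg fun σ _ => wCond_nonneg J h S σ)
  have hw := wCond_nonneg J h S σ
  by_cases hA : A σ
  · rw [Set.indicator_of_mem (show σ ∈ {σ | A σ} from hA), mul_comm]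
    exact mul_le_mul_of_nonneg_right (hle σ) hw
  · rw [Set.indicator_of_notMem (show σ ∉ {σ | A σ} from hA), mul_zero]
    by_cases hS : S σ
    · exact mul_nonpos_of_nonneg_of_nonpos hw (hzero σ hS hA)
    · simp [wCond, hS]

theorem condE2L_eq_condE2 (F : Config N → Config N → ℝ) {σ : Config N}
    (hS : ∀ u v : Fin N, u ≠ v → ∀ s t, S (upd σ u v s t)) :
    condE2L N J h S F σ = condE2 N J h F σ :=
  resampleMean_congr F fun u v huv s t =>
    Set.indicator_of_mem (show upd σ u v s t ∈ {σ | S σ} from hS u v huv s t) _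

theorem EL_abs_condE2L_sub_condE2_le {F : Config N → Config N → ℝ} {B : ℝ} (hB : 0 ≤ B)
    (hF : ∀ σ, ∀ u v : Fin N, u ≠ v → ∀ s t, |F σ (upd σ u v s t)| ≤ B)
    (hA : ∀ σ, S σ → ¬ A σ → ∀ u v : Fin N, u ≠ v → ∀ s t, S (upd σ u v s t)) :
    EL N J h S (fun σ => |condE2L N J h S F σ - condE2 N J h F σ|)
      ≤ 2 * B * probL N J h S A := by
  refine EL_le_mul_probL (fun σ hS hσ => ?_) fun σ => ?_
  · rw [condE2L_eq_condE2 F (hA σ hS hσ), sub_self, abs_zero]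
  · have hcond : |condE2L N J h S F σ| ≤ B := abs_resampleMean_le (wCond_nonneg J h S) hB (hF σ)
    have huncond : |condE2 N J h F σ| ≤ B := abs_resampleMean_le (wConf_nonneg J h) hB (hF σ)
    linarith [abs_sub (condE2L N J h S F σ) (condE2 N J h F σ)]

theorem exists_abs_le_and_eq_comp {α β : Type*} {f : α → ℝ} {g : α → β} (hf : f.FactorsThrough g)
    {s : Set α} {C : ℝ} (hC : 0 ≤ C) (hs : ∀ a ∈ s, |f a| ≤ C) :
    ∃ R : β → ℝ, (∀ b, |R b| ≤ C) ∧ ∀ a ∈ s, f a = R (g a) := by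
  have hCC : -C ≤ C := neg_le_self hC
  refine ⟨fun b => Set.projIcc (-C) C hCC (Function.extend g f 0 b),
    fun b => abs_le.mpr (Set.projIcc (-C) C hCC _).2, fun a ha => ?_⟩
  simp only [hf.extend_apply]
  rw [Set.projIcc_of_mem hCC (abs_le.mp (hs a ha))]

theorem exists_moment_errors {L : NNReal}
    (hL : LipschitzOnWith L (pairDownProb J h) (Set.Icc 0 1)) (hN : 1 ≤ N) {φ : ℝ → ℝ}
    (hφ : φ 0 = 0) {B : ℝ} (hB : ∀ x, |x| ≤ 2 → |φ x| ≤ B) (hS : S.FactorsThrough Msum)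
    (hA : ∀ σ, S σ → ¬ A σ → ∀ u v : Fin N, u ≠ v → ∀ s t, S (upd σ u v s t)) :
    let F : Config N → Config N → ℝ := fun σ σ' => φ ((Msum σ : ℝ) - Msum σ')
    ∃ R T : ℝ → ℝ, (∀ m, |R m| ≤ 2 * (1 + L) * B / N) ∧
      (∀ σ, wConf N J h σ ≠ 0 →
        condE2 N J h F σ = limitMean J h φ (mConf σ) + R (mConf σ)) ∧
      (∀ σ, condE2L N J h S F σ = condE2 N J h F σ + T (mConf σ)) ∧
      EL N J h S (fun σ => |T (mConf σ)|) ≤ 2 * (1 + L) * B * probL N J h S A := by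
  intro F
  have hB₀ : 0 ≤ B := (abs_nonneg _).trans (hB 0 (by simp))
  have huncond : (condE2 N J h F).FactorsThrough mConf := factorsThrough_mConf
    (resampleMean_factorsThrough_Msum (wConf_factorsThrough_Msum J h) φ)
  have hcond : (condE2L N J h S F).FactorsThrough mConf := factorsThrough_mConf
    (resampleMean_factorsThrough_Msum (wCond_factorsThrough_Msum J h hS) φ)
  obtain ⟨R, hR, hER⟩ := exists_abs_le_and_eq_comp (g := mConf)
    (f := fun σ => condE2 N J h F σ - limitMean J h φ (mConf σ)) (s := {σ | wConf N J h σ ≠ 0})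
    (fun σ σ' hm => by simp only [huncond hm, hm]) (by positivity)
    fun σ hσ => abs_condE2_sub_limitMean_le hL hN hφ hB hσ
  obtain ⟨T, hT⟩ := (Function.factorsThrough_iff (f := mConf)
    (fun σ => condE2L N J h S F σ - condE2 N J h F σ)).mp
    (fun σ σ' hm => by simp only [huncond hm, hcond hm])
  have hET : ∀ σ, condE2L N J h S F σ - condE2 N J h F σ = T (mConf σ) := congrFun hT
  refine ⟨R, T, hR, fun σ hσ => ?_, fun σ => ?_, ?_⟩
  · rw [← hER σ hσ, add_sub_cancel]
  · rw [← hET, add_sub_cancel]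
  · simp only [← hET]
    refine (EL_abs_condE2L_sub_condE2_le hB₀
      (fun σ u v huv s t => hB _ (abs_Msum_sub_Msum_upd_le σ huv s t)) hA).trans ?_
    refine mul_le_mul_of_nonneg_right ?_ probL_nonneg
    nlinarith [mul_nonneg L.coe_nonneg hB₀]

end Conditioning

theorem stmt17_general (J h : ℝ) :
    ∃ K : ℝ, ∀ ξ : ℝ, ∀ N : ℕ, 1 ≤ N → ∀ l : ℕ, l = 1 ∨ l = 2 → ∀ k : ℕ, k = 1 ∨ k = 2 →
      let S : Config N → Prop := fun σ => if l = 1 then mConf σ < ξ else ξ < mConf σ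
      let S'' : Config N → Prop := fun σ =>
        if l = 1 then ξ * N - 2 ≤ (Msum σ : ℝ) ∧ (Msum σ : ℝ) < ξ * N
        else ξ * N < (Msum σ : ℝ) ∧ (Msum σ : ℝ) ≤ ξ * N + 2
      let Lk : ℝ → ℝ := if k = 1 then Lone J h else Ltwo J h
      ∃ R T : ℝ → ℝ,
        (∀ m ∈ Set.Icc (0:ℝ) 1, |R m| ≤ K / N) ∧
        (∀ σ : Config N, wConf N J h σ ≠ 0 →
          condE2 N J h (fun σ σ' => ((Msum σ : ℝ) - (Msum σ' : ℝ))^k) σ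
            = Lk (mConf σ) + R (mConf σ)) ∧
        (∀ σ : Config N, S σ → wConf N J h σ ≠ 0 →
          condE2L N J h S (fun σ σ' => ((Msum σ : ℝ) - (Msum σ' : ℝ))^k) σ
            = Lk (mConf σ) + R (mConf σ) + T (mConf σ)) ∧
        EL N J h S (fun σ => |T (mConf σ)|) ≤ K * probL N J h S S'' := by
  obtain ⟨L, hL⟩ := exists_lipschitzOnWith_pairDownProb J h
  refine ⟨2 * (1 + L) * 4, fun ξ N hN l hl k hk => ?_⟩
  intro S S'' Lk
  have hpow : ∀ x : ℝ, |x| ≤ 2 → |x ^ k| ≤ 4 := fun x hx => by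
    rcases hk with rfl | rfl <;> rw [abs_pow] <;> nlinarith [abs_nonneg x]
  have hLk : ∀ σ : Config N, limitMean J h (· ^ k) (mConf σ) = Lk (mConf σ) := fun σ => by
    rcases hk with rfl | rfl
    · exact limitMean_pow_one (mConf_mem_Icc σ).2
    · exact limitMean_pow_two (mConf_mem_Icc σ).2
  have hS : S.FactorsThrough Msum := fun σ σ' hM => by simp only [S, mConf, hM]
  have hinterior : ∀ σ, S σ → ¬ S'' σ → ∀ u v : Fin N, u ≠ v → ∀ s t, S (upd σ u v s t) := by
    rcases hl with rfl | rfl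
    exacts [fun σ => mConf_upd_lt hN, fun σ => lt_mConf_upd hN]
  obtain ⟨R, T, hR, hE, hEL, hT⟩ := exists_moment_errors hL hN (φ := (· ^ k))
    (zero_pow (by omega)) hpow hS hinterior
  refine ⟨R, T, fun m _ => hR m, fun σ hσ => ?_, fun σ _ hσ => ?_, hT⟩
  · rw [hE σ hσ, hLk]
  · rw [hEL, hE σ hσ, hLk]

/-- Conditional moment computations along the critical line: under the
conditioned measure `ℙ_ℓ = ℙ(·|S_ℓ)` with the conditionally resampled exchangeable pair,
`E_ℓ[(M - M')^k | M] = L_k(m(σ)) + R_k(m(σ)) + T_{ℓ,k}(m(σ))`, where `R_k` are the error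
functions of the unconditioned computation (with `|R_k| ≤ K/N` on `[0,1]`) and
`E_ℓ|T_{ℓ,k}(m(σ))| ≤ K ℙ_ℓ(σ ∈ S_ℓ'')`. -/
theorem stmt17 (J h : ℝ) (hJ : 0 ≤ J) (ξ : ℝ) (hξ : ξ ∈ Set.Ioo (0:ℝ) 1) :
    ∃ K : ℝ, ∀ N : ℕ, 1 ≤ N → ∀ l : ℕ, l = 1 ∨ l = 2 → ∀ k : ℕ, k = 1 ∨ k = 2 →
      let S : Config N → Prop := fun σ => if l = 1 then mConf σ < ξ else ξ < mConf σ
      let S'' : Config N → Prop := fun σ =>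
        if l = 1 then ξ * N - 2 ≤ (Msum σ : ℝ) ∧ (Msum σ : ℝ) < ξ * N
        else ξ * N < (Msum σ : ℝ) ∧ (Msum σ : ℝ) ≤ ξ * N + 2
      let Lk : ℝ → ℝ := if k = 1 then Lone J h else Ltwo J h
      ∃ R T : ℝ → ℝ,
        (∀ m ∈ Set.Icc (0:ℝ) 1, |R m| ≤ K / N) ∧
        (∀ σ : Config N, wConf N J h σ ≠ 0 →
          condE2 N J h (fun σ σ' => ((Msum σ : ℝ) - (Msum σ' : ℝ))^k) σ
            = Lk (mConf σ) + R (mConf σ)) ∧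
        (∀ σ : Config N, S σ → wConf N J h σ ≠ 0 →
          condE2L N J h S (fun σ σ' => ((Msum σ : ℝ) - (Msum σ' : ℝ))^k) σ
            = Lk (mConf σ) + R (mConf σ) + T (mConf σ)) ∧
        EL N J h S (fun σ => |T (mConf σ)|) ≤ K * probL N J h S S'' := by
  exact (stmt17_general J h).imp fun _ hK => hK ξ
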